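/- For the prism allied graph D_n^t with n ≥ 4, the set {p_1, s_1, s_2, ..., s_n} is an independent set of vertices (no two of its vertices are adjacent) that is also a mixed metric generator; hence D_n^t admits an independent mixed metric generator of cardinality n + 1. -/

import Mathlib

/-- Vertices of the prism allied graph `Dₙᵗ`. -/
inductive DtV (n : ℕ) : Type
  | p : Fin n → DtV n
  | q : Fin n → DtV n
  | r : Fin n → DtV n
  | s : Fin n → DtV n
  deriving DecidableEq


/-- Cyclic successor on `Fin n` (indices mod `n`). -/
def finSucc {n : ℕ} (i : Fin n) : Fin n :=
  ⟨(i.val + 1) % n, Nat.mod_lt _ (Nat.lt_of_le_of_lt (Nat.zero_le _) i.isLt)⟩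

/-- Base relation for the edges of the prism allied graph. -/
def DtRel (n : ℕ) : DtV n → DtV n → Prop := fun a b =>
  ∃ i : Fin n,
    (a = .p i ∧ b = .q i) ∨ (a = .p i ∧ b = .p (finSucc i)) ∨
    (a = .q i ∧ b = .q (finSucc i)) ∨ (a = .r i ∧ b = .q i) ∨
    (a = .r i ∧ b = .q (finSucc i)) ∨ (a = .r i ∧ b = .s i)

/-- The prism allied graph `Dₙᵗ`. -/
def Dt (n : ℕ) : SimpleGraph (DtV n) := SimpleGraph.fromRel (DtRel n)

/-- Vertices of the web graph `Wₙ`. -/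
inductive WV (n : ℕ) : Type
  | p : Fin n → WV n
  | q : Fin n → WV n
  | r : Fin n → WV n
  deriving DecidableEq

/-- Base relation for the edges of the web graph. -/
def WRel (n : ℕ) : WV n → WV n → Prop := fun a b =>
  ∃ i : Fin n,
    (a = .p i ∧ b = .q i) ∨ (a = .p i ∧ b = .p (finSucc i)) ∨
    (a = .q i ∧ b = .q (finSucc i)) ∨ (a = .q i ∧ b = .r i)

/-- The web graph `Wₙ`. -/
def W (n : ℕ) : SimpleGraph (WV n) := SimpleGraph.fromRel (WRel n)

/-- Distance from a vertex to an (unordered) edge: `d(x, uv) = min (d x u) (d x v)`. -/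
noncomputable def edgeDist {V : Type*} (G : SimpleGraph V) (w : V) (e : Sym2 V) : ℕ :=
  Sym2.lift ⟨fun u v => min (G.dist w u) (G.dist w v), fun u v => min_comm _ _⟩ e

/-- Distance from a vertex to a mixed element (a vertex or an edge). -/
noncomputable def mixedDist {V : Type*} (G : SimpleGraph V) (w : V) :
    V ⊕ G.edgeSet → ℕ :=
  Sum.elim (G.dist w) (fun e => edgeDist G w e.1)

/-- `M` is a mixed metric generator: every two distinct elements of `V(G) ∪ E(G)` are
distinguished by some vertex of `M`. -/
def IsMixedMetricGen {V : Type*} (G : SimpleGraph V) (M : Set V) : Prop :=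
  ∀ a b : V ⊕ G.edgeSet, a ≠ b → ∃ w ∈ M, mixedDist G w a ≠ mixedDist G w b

/-- `M` is a (vertex) resolving set. -/
def IsResolving {V : Type*} (G : SimpleGraph V) (M : Set V) : Prop :=
  ∀ a b : V, a ≠ b → ∃ w ∈ M, G.dist w a ≠ G.dist w b

/-- `M` is an edge resolving set. -/
def IsEdgeResolving {V : Type*} (G : SimpleGraph V) (M : Set V) : Prop :=
  ∀ a b : G.edgeSet, a ≠ b → ∃ w ∈ M, edgeDist G w a.1 ≠ edgeDist G w b.1

/-- The metric dimension of `G`. -/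
noncomputable def metricDim {V : Type*} (G : SimpleGraph V) : ℕ :=
  sInf {k | ∃ M : Set V, IsResolving G M ∧ M.ncard = k}

/-- The edge metric dimension of `G`. -/
noncomputable def edgeMetricDim {V : Type*} (G : SimpleGraph V) : ℕ :=
  sInf {k | ∃ M : Set V, IsEdgeResolving G M ∧ M.ncard = k}

/-- The mixed metric dimension of `G`. -/
noncomputable def mixedMetricDim {V : Type*} (G : SimpleGraph V) : ℕ :=
  sInf {k | ∃ M : Set V, IsMixedMetricGen G M ∧ M.ncard = k}

/-!
Treat a vertex `v` as the degenerate pair `s(v, v)`, so that vertices and edges alike are unordered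
pairs `e` at distance `edgeDist` from a vertex. The balls of radius at most 2 about the `s j`, and
the part of the ball of radius 3 on the cycle of the `p i`, are small and explicit, so the distances
from the `s j` nearly determine which vertices belong to `e`: `s j ∈ e` means distance 0, `r j ∈ e`
means distance at most 1 up to telling the vertex `s j` from the edge `r j s j`, which `s (j + 1)`
does, and `q (j + 1) ∈ e` exactly when `s j` and `s (j + 1)` are both within 2. The last criterion
needs `4 ≤ n`: the indices within distance 2 of `e` form an arc of at most three, which in a shorter
cycle closes up and gives a false pair of neighbours. If every `s j` is at distance at least 3, then
`e` lies on the cycle of the `p i` and the same criterion with 3 in place of 2 locates it. The only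
confusion left is between `q i` and the edge `p i q i`; any one `p z` resolves it, being closer
to `p i` than to `q i`.
-/

section General

variable {V : Type*} {G : SimpleGraph V}

theorem graph_dist_le_succ_iff (hG : G.Preconnected) {u v : V} {k : ℕ} :
    G.dist u v ≤ k + 1 ↔ ∃ w, (v = w ∨ G.Adj v w) ∧ G.dist u w ≤ k := by
  constructor
  · intro h
    obtain ⟨p, hp⟩ := (hG v u).exists_walk_length_eq_dist
    rw [SimpleGraph.dist_comm] at hp
    cases p with
    | nil => exact ⟨u, .inl rfl, by simp⟩
    | @cons _ w _ hvw p =>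
      refine ⟨w, .inr hvw, ?_⟩
      rw [SimpleGraph.dist_comm]
      have := SimpleGraph.dist_le p
      rw [SimpleGraph.Walk.length_cons] at hp
      omega
  · rintro ⟨w, rfl | hvw, hw⟩
    · omega
    · have h_step := (hG u w).dist_triangle_left v
      rw [SimpleGraph.dist_eq_one_iff_adj.2 hvw.symm] at h_step
      omega

theorem le_add_dist_of_forall_adj (hG : G.Preconnected) {f : V → ℕ}
    (hf : ∀ u v, G.Adj u v → f v ≤ f u + 1) (u v : V) : f v ≤ f u + G.dist u v := by
  have h_walk : ∀ {u v : V} (p : G.Walk u v), f v ≤ f u + p.length := by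
    intro u v p
    induction p with
    | nil => simp
    | cons h p ih =>
      rw [SimpleGraph.Walk.length_cons]
      have := hf _ _ h
      omega
  obtain ⟨p, hp⟩ := (hG u v).exists_walk_length_eq_dist
  exact hp ▸ h_walk p

theorem edgeDist_mk (w u v : V) : edgeDist G w s(u, v) = min (G.dist w u) (G.dist w v) := rfl

theorem edgeDist_mk_le_iff {w u v : V} {k : ℕ} :
    edgeDist G w s(u, v) ≤ k ↔ G.dist w u ≤ k ∨ G.dist w v ≤ k :=
  min_le_iff

theorem mem_iff_edgeDist_eq_zero (hG : G.Preconnected) {w : V} {e : Sym2 V} :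
    w ∈ e ↔ edgeDist G w e = 0 := by
  induction e with
  | _ u v => simp [edgeDist_mk, hG w u, hG w v]

/-- A vertex or an edge as an unordered pair of vertices, a vertex `v` becoming `s(v, v)`. Both
kinds of distance then turn into `edgeDist`. -/
def endpoints : V ⊕ G.edgeSet → Sym2 V :=
  Sum.elim Sym2.diag Subtype.val

theorem endpoints_injective : Function.Injective (endpoints (G := G)) :=
  Sym2.diag_injective.sumElim Subtype.val_injective fun v e h =>
    G.not_isDiag_of_mem_edgeSet e.2 (h ▸ Sym2.diag_isDiag v)

theorem mixedDist_eq_edgeDist_endpoints (w : V) (a : V ⊕ G.edgeSet) :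
    mixedDist G w a = edgeDist G w (endpoints a) := by
  rcases a with v | e
  · exact (min_self _).symm
  · rfl

theorem isMixedMetricGen_of_endpoints {M : Set V}
    (h : ∀ a b : V ⊕ G.edgeSet,
      (∀ w ∈ M, edgeDist G w (endpoints a) = edgeDist G w (endpoints b)) →
        endpoints a = endpoints b) :
    IsMixedMetricGen G M := by
  intro a b hab
  by_contra! h_eq
  simp only [mixedDist_eq_edgeDist_endpoints] at h_eq
  exact hab (endpoints_injective (h a b h_eq))

end General

section FinSucc

variable {n : ℕ}

theorem val_iterate_finSucc (k : ℕ) (i : Fin n) : (finSucc^[k] i).val = (i.val + k) % n := by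
  induction k with
  | zero => simp [Nat.mod_eq_of_lt i.isLt]
  | succ k ih =>
    rw [Function.iterate_succ_apply']
    simp [finSucc, ih, Nat.add_assoc]

theorem exists_iterate_finSucc_eq (i j : Fin n) : ∃ k, finSucc^[k] i = j := by
  refine ⟨n - i + j, Fin.ext ?_⟩
  rw [val_iterate_finSucc, ← Nat.add_assoc, Nat.add_sub_cancel' i.isLt.le, Nat.add_mod_left,
    Nat.mod_eq_of_lt j.isLt]

theorem iterate_finSucc_ne {k : ℕ} (hk : 0 < k) (hkn : k < n) (i : Fin n) :
    finSucc^[k] i ≠ i := by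
  intro h
  have h_mod : i.val + k ≡ i.val + 0 [MOD n] := by
    rw [Nat.ModEq, ← val_iterate_finSucc, h, Nat.add_zero, Nat.mod_eq_of_lt i.isLt]
  exact hk.ne' (Nat.ModEq.add_left_cancel' _ h_mod |>.eq_of_lt_of_lt hkn (by omega))

theorem finSucc_ne_self (hn : 2 ≤ n) (i : Fin n) : finSucc i ≠ i :=
  iterate_finSucc_ne (k := 1) one_pos hn i

theorem finSucc_finSucc_ne_self (hn : 3 ≤ n) (i : Fin n) : finSucc (finSucc i) ≠ i :=
  iterate_finSucc_ne (k := 2) two_pos hn i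

theorem finSucc_finSucc_finSucc_ne_self (hn : 4 ≤ n) (i : Fin n) :
    finSucc (finSucc (finSucc i)) ≠ i :=
  iterate_finSucc_ne (k := 3) three_pos hn i

theorem finSucc_surjective : Function.Surjective (finSucc (n := n)) := by
  intro j
  obtain ⟨k, hk⟩ := exists_iterate_finSucc_eq (finSucc j) j
  refine ⟨finSucc^[k] j, ?_⟩
  rw [← Function.iterate_succ_apply' finSucc, Function.iterate_succ_apply, hk]

theorem finSucc_injective : Function.Injective (finSucc (n := n)) :=
  Finite.injective_iff_surjective.2 finSucc_surjective

end FinSucc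

namespace Dt

variable {n : ℕ}

theorem rel_or_rel_of_adj {v w : DtV n} (h : (Dt n).Adj v w) : DtRel n v w ∨ DtRel n w v :=
  ((SimpleGraph.fromRel_adj _ _ _).1 h).2

theorem eq_or_adj_iff {v w : DtV n} :
    v = w ∨ (Dt n).Adj v w ↔ v = w ∨ DtRel n v w ∨ DtRel n w v := by
  rw [Dt, SimpleGraph.fromRel_adj]
  tauto

theorem reachable_of_rel {v w : DtV n} (h : DtRel n v w) : (Dt n).Reachable v w := by
  rcases eq_or_adj_iff.2 (.inr (.inl h)) with rfl | h_adj
  · rfl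
  · exact h_adj.reachable

theorem reachable_p_p (i j : Fin n) : (Dt n).Reachable (.p i) (.p j) := by
  obtain ⟨k, rfl⟩ := exists_iterate_finSucc_eq i j
  induction k with
  | zero => rfl
  | succ k ih =>
    rw [Function.iterate_succ_apply']
    exact ih.trans (reachable_of_rel ⟨finSucc^[k] i, by simp⟩)

theorem preconnected : (Dt n).Preconnected := by
  have reachable_p (v : DtV n) : ∃ i, (Dt n).Reachable (.p i) v := by
    have hq (i : Fin n) : (Dt n).Reachable (.p i) (.q i) := reachable_of_rel ⟨i, by simp⟩
    have hr (i : Fin n) : (Dt n).Reachable (.p i) (.r i) :=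
      (hq i).trans (reachable_of_rel ⟨i, by simp⟩).symm
    have hs (i : Fin n) : (Dt n).Reachable (.p i) (.s i) :=
      (hr i).trans (reachable_of_rel ⟨i, by simp⟩)
    rcases v with i | i | i | i
    exacts [⟨i, .rfl⟩, ⟨i, hq i⟩, ⟨i, hr i⟩, ⟨i, hs i⟩]
  intro u v
  obtain ⟨i, hi⟩ := reachable_p u
  obtain ⟨j, hj⟩ := reachable_p v
  exact hi.symm.trans ((reachable_p_p i j).trans hj)

theorem dist_le_zero_iff {u v : DtV n} : (Dt n).dist u v ≤ 0 ↔ u = v := by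
  rw [Nat.le_zero, (preconnected u v).dist_eq_zero_iff]

section Recursion

variable {u : DtV n} {i : Fin n} {k : ℕ}

theorem dist_p_le_succ_iff : (Dt n).dist u (.p i) ≤ k + 1 ↔
    (Dt n).dist u (.p i) ≤ k ∨ (Dt n).dist u (.q i) ≤ k ∨ (Dt n).dist u (.p (finSucc i)) ≤ k ∨
      ∃ j, finSucc j = i ∧ (Dt n).dist u (.p j) ≤ k := by
  simp only [graph_dist_le_succ_iff preconnected, eq_or_adj_iff, DtRel]
  grind

theorem dist_q_le_succ_iff : (Dt n).dist u (.q i) ≤ k + 1 ↔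
    (Dt n).dist u (.q i) ≤ k ∨ (Dt n).dist u (.p i) ≤ k ∨ (Dt n).dist u (.r i) ≤ k ∨
      (Dt n).dist u (.q (finSucc i)) ≤ k ∨
      ∃ j, finSucc j = i ∧ ((Dt n).dist u (.q j) ≤ k ∨ (Dt n).dist u (.r j) ≤ k) := by
  simp only [graph_dist_le_succ_iff preconnected, eq_or_adj_iff, DtRel]
  grind

theorem dist_r_le_succ_iff : (Dt n).dist u (.r i) ≤ k + 1 ↔
    (Dt n).dist u (.r i) ≤ k ∨ (Dt n).dist u (.s i) ≤ k ∨ (Dt n).dist u (.q i) ≤ k ∨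
      (Dt n).dist u (.q (finSucc i)) ≤ k := by
  simp only [graph_dist_le_succ_iff preconnected, eq_or_adj_iff, DtRel]
  grind

theorem dist_s_le_succ_iff : (Dt n).dist u (.s i) ≤ k + 1 ↔
    (Dt n).dist u (.s i) ≤ k ∨ (Dt n).dist u (.r i) ≤ k := by
  simp only [graph_dist_le_succ_iff preconnected, eq_or_adj_iff, DtRel]
  grind

end Recursion

theorem dist_s_le_one_iff {j : Fin n} {v : DtV n} :
    (Dt n).dist (.s j) v ≤ 1 ↔ v = .s j ∨ v = .r j := by
  rcases v with i | i | i | i <;>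
    simp only [dist_p_le_succ_iff (k := 0), dist_q_le_succ_iff (k := 0),
      dist_r_le_succ_iff (k := 0), dist_s_le_succ_iff (k := 0), dist_le_zero_iff] <;>
    grind

theorem dist_s_le_two_iff {j : Fin n} {v : DtV n} :
    (Dt n).dist (.s j) v ≤ 2 ↔ v = .s j ∨ v = .r j ∨ v = .q j ∨ v = .q (finSucc j) := by
  rcases v with i | i | i | i <;>
    simp only [dist_p_le_succ_iff (k := 1), dist_q_le_succ_iff (k := 1),
      dist_r_le_succ_iff (k := 1), dist_s_le_succ_iff (k := 1), dist_s_le_one_iff] <;>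
    grind [finSucc_injective.eq_iff]

theorem dist_s_p_le_three_iff {i j : Fin n} :
    (Dt n).dist (.s j) (.p i) ≤ 3 ↔ i = j ∨ i = finSucc j := by
  simp [dist_p_le_succ_iff (k := 2), dist_s_le_two_iff]

theorem dist_s_s_le_three_iff {i j : Fin n} : (Dt n).dist (.s j) (.s i) ≤ 3 ↔ i = j := by
  simp [dist_s_le_succ_iff (k := 2), dist_s_le_two_iff]

theorem dist_s_finSucc_r_le_three (i : Fin n) : (Dt n).dist (.s (finSucc i)) (.r i) ≤ 3 := by
  simp [dist_r_le_succ_iff (k := 2), dist_s_le_two_iff]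

theorem dist_p_p_lt_dist_p_q (z i : Fin n) :
    (Dt n).dist (.p z) (.p i) < (Dt n).dist (.p z) (.q i) := by
  -- Project onto the cycle of the `p i` and add one off it: `f` grows by at most one along an edge,
  -- so it bounds the distance from `p z` below.
  let f : DtV n → ℕ
    | .p i => (Dt n).dist (.p z) (.p i)
    | .q i | .r i | .s i => (Dt n).dist (.p z) (.p i) + 1
  have hf : ∀ u v, (Dt n).Adj u v → f v ≤ f u + 1 := by
    have h_cycle (i : Fin n) :
        (Dt n).dist (.p z) (.p i) ≤ (Dt n).dist (.p z) (.p (finSucc i)) + 1 ∧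
          (Dt n).dist (.p z) (.p (finSucc i)) ≤ (Dt n).dist (.p z) (.p i) + 1 := by
      constructor
      · exact dist_p_le_succ_iff.2 (.inr (.inr (.inl le_rfl)))
      · exact dist_p_le_succ_iff.2 (.inr (.inr (.inr ⟨i, rfl, le_rfl⟩)))
    have h_rel (u v : DtV n) (h : DtRel n u v) : f v ≤ f u + 1 ∧ f u ≤ f v + 1 := by
      obtain ⟨i, h⟩ := h
      have := h_cycle i
      rcases h with ⟨rfl, rfl⟩ | ⟨rfl, rfl⟩ | ⟨rfl, rfl⟩ | ⟨rfl, rfl⟩ | ⟨rfl, rfl⟩ | ⟨rfl, rfl⟩ <;>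
        simp only [f] <;> omega
    intro u v huv
    rcases rel_or_rel_of_adj huv with h | h
    · exact (h_rel u v h).1
    · exact (h_rel v u h).2
  have h_bound := le_add_dist_of_forall_adj preconnected hf (.p z) (.q i)
  simp only [f, SimpleGraph.dist_self, Nat.zero_add] at h_bound
  exact h_bound

/-- The vertices and edges of `Dₙᵗ` as unordered pairs, listed by type: in place of
`e = endpoints a` this lets one argue by cases on `e`. -/
inductive IsElement : Sym2 (DtV n) → Prop
  | p (i : Fin n) : IsElement s(.p i, .p i)
  | q (i : Fin n) : IsElement s(.q i, .q i)
  | r (i : Fin n) : IsElement s(.r i, .r i)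
  | s (i : Fin n) : IsElement s(.s i, .s i)
  | pq (i : Fin n) : IsElement s(.p i, .q i)
  | pp (i : Fin n) : IsElement s(.p i, .p (finSucc i))
  | qq (i : Fin n) : IsElement s(.q i, .q (finSucc i))
  | rq (i : Fin n) : IsElement s(.r i, .q i)
  | rq' (i : Fin n) : IsElement s(.r i, .q (finSucc i))
  | rs (i : Fin n) : IsElement s(.r i, .s i)

theorem IsElement.of_rel {u v : DtV n} (h : DtRel n u v) : IsElement s(u, v) := by
  obtain ⟨i, h⟩ := h
  rcases h with ⟨rfl, rfl⟩ | ⟨rfl, rfl⟩ | ⟨rfl, rfl⟩ | ⟨rfl, rfl⟩ | ⟨rfl, rfl⟩ | ⟨rfl, rfl⟩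
  exacts [.pq i, .pp i, .qq i, .rq i, .rq' i, .rs i]

theorem isElement_endpoints (a : DtV n ⊕ (Dt n).edgeSet) : IsElement (endpoints a) := by
  rcases a with (i | i | i | i) | ⟨⟨u, v⟩, huv⟩
  · exact .p i
  · exact .q i
  · exact .r i
  · exact .s i
  · rcases rel_or_rel_of_adj huv with h | h
    · exact .of_rel h
    · change IsElement s(u, v)
      exact Sym2.eq_swap ▸ IsElement.of_rel h

namespace IsElement

variable {e e' : Sym2 (DtV n)}

theorem r_mem_iff (he : IsElement e) (hn : 2 ≤ n) (j : Fin n) :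
    .r j ∈ e ↔ edgeDist (Dt n) (.s j) e ≤ 1 ∧
      (.s j ∈ e → edgeDist (Dt n) (.s (finSucc j)) e ≤ 3) := by
  cases he <;>
    simp only [Sym2.mem_iff, edgeDist_mk_le_iff, dist_s_le_one_iff, dist_s_s_le_three_iff] <;>
    grind [finSucc_ne_self, dist_s_finSucc_r_le_three]

theorem q_finSucc_mem_iff (he : IsElement e) (hn : 4 ≤ n) (j : Fin n) :
    .q (finSucc j) ∈ e ↔ edgeDist (Dt n) (.s j) e ≤ 2 ∧
      edgeDist (Dt n) (.s (finSucc j)) e ≤ 2 := by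
  cases he <;>
    simp only [Sym2.mem_iff, edgeDist_mk_le_iff, dist_s_le_two_iff, reduceCtorEq, DtV.q.injEq,
      DtV.r.injEq, DtV.s.injEq, or_false, false_or, or_self] <;>
    grind [finSucc_injective.eq_iff, finSucc_ne_self, finSucc_finSucc_ne_self,
      finSucc_finSucc_finSucc_ne_self]

theorem p_finSucc_mem_iff (he : IsElement e) (hn : 4 ≤ n)
    (h_far : ∀ j, 2 < edgeDist (Dt n) (.s j) e) (j : Fin n) :
    .p (finSucc j) ∈ e ↔ edgeDist (Dt n) (.s j) e ≤ 3 ∧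
      edgeDist (Dt n) (.s (finSucc j)) e ≤ 3 := by
  simp only [← not_le] at h_far
  cases he <;>
    simp only [Sym2.mem_iff, edgeDist_mk_le_iff, dist_s_le_two_iff, dist_s_p_le_three_iff,
      reduceCtorEq, DtV.p.injEq, DtV.q.injEq, DtV.r.injEq, DtV.s.injEq, or_false, false_or,
      or_self] at h_far ⊢ <;>
    grind [finSucc_injective.eq_iff, finSucc_ne_self, finSucc_finSucc_ne_self,
      finSucc_finSucc_finSucc_ne_self]

theorem eq_pq_of_p_mem (he : IsElement e) {i j : Fin n} (hp : .p i ∈ e)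
    (h_near : edgeDist (Dt n) (.s j) e ≤ 2) : e = s(.p i, .q i) := by
  cases he <;> simp only [edgeDist_mk_le_iff, dist_s_le_two_iff] at h_near <;> grind

theorem eq_q_or_eq_pq_of_q_mem (he : IsElement e) {i : Fin n} (hq : .q i ∈ e)
    (h_only : ∀ v ∈ e, (∀ k, v ≠ .p k) → v = .q i) :
    e = s(.q i, .q i) ∨ e = s(.p i, .q i) := by
  cases he <;>
    simp only [Sym2.mem_iff, forall_eq_or_imp, forall_eq, ne_eq, reduceCtorEq, not_false_eq_true,
      implies_true, forall_const] at hq h_only <;>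
    grind

theorem mem_iff_mem_of_edgeDist_s_eq (he : IsElement e) (he' : IsElement e') (hn : 4 ≤ n)
    (hs : ∀ j, edgeDist (Dt n) (.s j) e = edgeDist (Dt n) (.s j) e') {v : DtV n}
    (hv : ∀ i, v ≠ .p i) : v ∈ e ↔ v ∈ e' := by
  have s_mem_iff (j : Fin n) : .s j ∈ e ↔ .s j ∈ e' := by
    rw [mem_iff_edgeDist_eq_zero preconnected, hs, mem_iff_edgeDist_eq_zero preconnected]
  rcases v with i | i | i | i
  · exact absurd rfl (hv i)
  · obtain ⟨j, rfl⟩ := finSucc_surjective i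
    rw [he.q_finSucc_mem_iff hn, he'.q_finSucc_mem_iff hn, hs, hs]
  · rw [he.r_mem_iff (by omega), he'.r_mem_iff (by omega), hs, hs, s_mem_iff]
  · exact s_mem_iff i

theorem p_mem_of_edgeDist_eq (he : IsElement e) (he' : IsElement e') (hn : 4 ≤ n) {z : Fin n}
    (hz : edgeDist (Dt n) (.p z) e = edgeDist (Dt n) (.p z) e')
    (hs : ∀ j, edgeDist (Dt n) (.s j) e = edgeDist (Dt n) (.s j) e') {i : Fin n}
    (hp : .p i ∈ e) : .p i ∈ e' := by
  by_cases h_far : ∀ j, 2 < edgeDist (Dt n) (.s j) e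
  · obtain ⟨j, rfl⟩ := finSucc_surjective i
    have h_far' : ∀ j, 2 < edgeDist (Dt n) (.s j) e' := fun j => hs j ▸ h_far j
    rwa [he'.p_finSucc_mem_iff hn h_far', ← hs, ← hs, ← he.p_finSucc_mem_iff hn h_far]
  · push Not at h_far
    obtain ⟨j, h_near⟩ := h_far
    obtain rfl := he.eq_pq_of_p_mem hp h_near
    have h_mem {v : DtV n} (hv : ∀ k, v ≠ .p k) : v ∈ s(.p i, .q i) ↔ v ∈ e' :=
      he.mem_iff_mem_of_edgeDist_s_eq he' hn hs hv
    have hq : .q i ∈ e' := (h_mem (by simp)).1 (Sym2.mem_mk_right _ _)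
    have h_only : ∀ v ∈ e', (∀ k, v ≠ .p k) → v = .q i := fun v hve' hv =>
      (Sym2.mem_iff.1 ((h_mem hv).2 hve')).resolve_left (hv i)
    rcases he'.eq_q_or_eq_pq_of_q_mem hq h_only with rfl | rfl
    · have h_lt := dist_p_p_lt_dist_p_q z i
      simp only [edgeDist_mk] at hz
      omega
    · exact Sym2.mem_mk_left _ _

theorem eq_of_edgeDist_eq (he : IsElement e) (he' : IsElement e') (hn : 4 ≤ n) {z : Fin n}
    (hz : edgeDist (Dt n) (.p z) e = edgeDist (Dt n) (.p z) e')
    (hs : ∀ j, edgeDist (Dt n) (.s j) e = edgeDist (Dt n) (.s j) e') : e = e' := by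
  ext v
  by_cases hv : ∀ i, v ≠ .p i
  · exact he.mem_iff_mem_of_edgeDist_s_eq he' hn hs hv
  · push Not at hv
    obtain ⟨i, rfl⟩ := hv
    exact ⟨he.p_mem_of_edgeDist_eq he' hn hz hs,
      he'.p_mem_of_edgeDist_eq he hn hz.symm fun j => (hs j).symm⟩

end IsElement

theorem isMixedMetricGen_p_union_range_s (hn : 4 ≤ n) (z : Fin n) :
    IsMixedMetricGen (Dt n) ({.p z} ∪ Set.range .s) :=
  isMixedMetricGen_of_endpoints fun a b h =>
    (isElement_endpoints a).eq_of_edgeDist_eq (isElement_endpoints b) hn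
      (h (.p z) (.inl rfl)) fun j => h (.s j) (.inr ⟨j, rfl⟩)

theorem isIndepSet_p_union_range_s (z : Fin n) :
    (Dt n).IsIndepSet ({.p z} ∪ Set.range .s) := by
  have h_rel : ∀ a ∈ ({.p z} ∪ Set.range .s : Set (DtV n)),
      ∀ b ∈ ({.p z} ∪ Set.range .s : Set (DtV n)), a ≠ b → ¬ DtRel n a b := by
    rintro _ (rfl | ⟨i, rfl⟩) _ (rfl | ⟨j, rfl⟩) <;> simp [DtRel]
  intro a ha b hb hab h_adj
  rcases rel_or_rel_of_adj h_adj with h | h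
  · exact h_rel a ha b hb hab h
  · exact h_rel b hb a ha hab.symm h

theorem ncard_p_union_range_s (z : Fin n) :
    ({.p z} ∪ Set.range .s : Set (DtV n)).ncard = n + 1 := by
  have s_injective : Function.Injective (DtV.s (n := n)) := fun _ _ => DtV.s.inj
  rw [Set.singleton_union, Set.ncard_insert_of_notMem (by simp),
    Set.ncard_range_of_injective s_injective, Nat.card_fin]

end Dt

theorem stmt5 (n : ℕ) (hn : 4 ≤ n) :
    (∀ a ∈ ({DtV.p ⟨0, by omega⟩} ∪ Set.range DtV.s : Set (DtV n)),
      ∀ b ∈ ({DtV.p ⟨0, by omega⟩} ∪ Set.range DtV.s : Set (DtV n)), ¬ (Dt n).Adj a b) ∧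
    IsMixedMetricGen (Dt n) ({DtV.p ⟨0, by omega⟩} ∪ Set.range DtV.s) ∧
    ({DtV.p ⟨0, by omega⟩} ∪ Set.range DtV.s : Set (DtV n)).ncard = n + 1 :=
  ⟨fun _ ha _ hb h_adj => Dt.isIndepSet_p_union_range_s _ ha hb h_adj.ne h_adj,
    Dt.isMixedMetricGen_p_union_range_s hn _, Dt.ncard_p_union_range_s _⟩
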